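/- Let n ≥ 1 and let H(X) ∈ ℤ[X₁,…,Xₙ] be absolutely irreducible (irreducible in ℚ̄[X₁,…,Xₙ]) with deg_{X₁} H ≥ 1 and ‖H‖ ≥ 3, and fix an integer d ≥ 2. Then there exists a finite set E of primes with |E| ≤ C(n,deg H) · log‖H‖ / log log‖H‖, for a constant C(n,deg H) depending only on n and deg H, such that for every prime p ∉ E and every multiplicative character χ of 𝔽_p^× of exact order d (extended to 𝔽_p by χ(0) = 0): Σ_{u ∈ 𝔽_pⁿ, u₁ = 0} |S(u,p)|² ≤ C′ · p^{2n−1}, where S(u,p) := Σ_{x ∈ 𝔽_pⁿ} χ(H(x)) · e_p(u·x) and C′ depends only on n, d and deg H. -/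

import Mathlib

open Polynomial

noncomputable section

/-- The rational function field `ℚ(X₁,…,Xₙ)`. -/
abbrev RF (n : ℕ) := FractionRing (MvPolynomial (Fin n) ℚ)

/-- Base change a polynomial `F ∈ ℤ[Y,X₁,…,Xₙ]` (written as a polynomial in `Y`
with coefficients in `ℤ[X₁,…,Xₙ]`) to `ℚ[Y,X₁,…,Xₙ]`. -/
def toQ {n : ℕ} (F : Polynomial (MvPolynomial (Fin n) ℤ)) :
    Polynomial (MvPolynomial (Fin n) ℚ) :=
  F.map (MvPolynomial.map (Int.castRingHom ℚ))

/-- View a polynomial in `ℚ[X][Y]` as a polynomial in `ℚ(X)[Y]`. -/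
def toFracQ {n : ℕ} (F : Polynomial (MvPolynomial (Fin n) ℚ)) : Polynomial (RF n) :=
  F.map (algebraMap (MvPolynomial (Fin n) ℚ) (RF n))

/-- View a polynomial in `ℤ[X][Y]` as a polynomial in `ℚ(X)[Y]`. -/
def toFrac {n : ℕ} (F : Polynomial (MvPolynomial (Fin n) ℤ)) : Polynomial (RF n) :=
  toFracQ (toQ F)

/-- The degree of `F(Y,X)` in the variable `Xᵢ`. -/
def degX {n : ℕ} {R : Type*} [CommSemiring R]
    (F : Polynomial (MvPolynomial (Fin n) R)) (i : Fin n) : ℕ :=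
  F.support.sup fun k => (F.coeff k).degreeOf i

/-- The total degree of `F(Y,X₁,…,Xₙ)` as a polynomial in `n+1` variables. -/
def totalDeg {n : ℕ} {R : Type*} [CommSemiring R]
    (F : Polynomial (MvPolynomial (Fin n) R)) : ℕ :=
  F.support.sup fun k => k + (F.coeff k).totalDegree

/-- `‖g‖`: the maximum absolute value of a coefficient of `g ∈ ℤ[X₁,…,Xₙ]`. -/
def mvNorm {n : ℕ} (g : MvPolynomial (Fin n) ℤ) : ℕ :=
  g.support.sup fun m => (g.coeff m).natAbs

/-- `‖F‖`: the maximum absolute value of a coefficient of `F ∈ ℤ[Y,X₁,…,Xₙ]`. -/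
def polyNorm {n : ℕ} (F : Polynomial (MvPolynomial (Fin n) ℤ)) : ℕ :=
  F.support.sup fun k => mvNorm (F.coeff k)

/-- The counting function
`N(F,B) = #{x ∈ ℤⁿ ∩ [−B,B]ⁿ : ∃ y ∈ ℤ, F(y,x) = 0}`. -/
def NFB {n : ℕ} (F : Polynomial (MvPolynomial (Fin n) ℤ)) (B : ℝ) : ℕ :=
  Set.ncard {x : Fin n → ℤ | (∀ i, |(x i : ℝ)| ≤ B) ∧
    ∃ y : ℤ, Polynomial.eval y (F.map (MvPolynomial.eval x)) = 0}

/-- `F ∈ ℤ[Y,X₁,…,Xₙ]` is absolutely irreducible: irreducible over `ℚ̄`. -/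
def AbsIrred {n : ℕ} (F : Polynomial (MvPolynomial (Fin n) ℤ)) : Prop :=
  Irreducible (F.map (MvPolynomial.map (Int.castRingHom (AlgebraicClosure ℚ))))

/-- `G` has positive degree in `Y` and in each variable `Xᵢ`. -/
def AllPosDeg {n : ℕ} (G : Polynomial (MvPolynomial (Fin n) ℤ)) : Prop :=
  0 < G.natDegree ∧ ∀ i : Fin n, 0 < degX G i

/-- A field extension `M` of `ℚ(X₁,…,Xₙ)` is an `n`-genuine extension: every
`G ∈ ℤ[Y,X₁,…,Xₙ]` irreducible over `ℚ(X)` with `M ≅ ℚ(X)[Y]/(G)` has positive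
degree in each of `Y, X₁, …, Xₙ`. -/
def IsGenuineExt (n : ℕ) (M : Type*) [Field M] [Algebra (RF n) M] : Prop :=
  ∀ G : Polynomial (MvPolynomial (Fin n) ℤ), Irreducible (toFrac G) →
    Nonempty (AdjoinRoot (toFrac G) ≃ₐ[RF n] M) → AllPosDeg G

/-- A field extension `M` of `ℚ(X₁,…,Xₙ)` is strongly `n`-genuine: every
intermediate field strictly containing `ℚ(X)` is `n`-genuine. -/
def IsStronglyGenuineExt (n : ℕ) (M : Type*) [Field M] [Algebra (RF n) M] : Prop :=
  ∀ M' : IntermediateField (RF n) M, M' ≠ ⊥ → IsGenuineExt n M'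

/-- The extension `ℚ(X)[Y]/(Fq)` presented by `Fq ∈ ℚ[X][Y]` is `n`-genuine. -/
def GenuineExtOfQ {n : ℕ} (Fq : Polynomial (MvPolynomial (Fin n) ℚ)) : Prop :=
  ∀ G : Polynomial (MvPolynomial (Fin n) ℤ), Irreducible (toFrac G) →
    Nonempty (AdjoinRoot (toFrac G) ≃ₐ[RF n] AdjoinRoot (toFracQ Fq)) → AllPosDeg G

/-- The extension `ℚ(X)[Y]/(Fq)` presented by `Fq ∈ ℚ[X][Y]` is strongly
`n`-genuine: for any field `M` isomorphic over `ℚ(X)` to `ℚ(X)[Y]/(Fq)`, every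
intermediate field strictly containing `ℚ(X)` is `n`-genuine. -/
def StronglyGenuineExtOfQ {n : ℕ} (Fq : Polynomial (MvPolynomial (Fin n) ℚ)) : Prop :=
  ∀ (M : Type) [Field M] [Algebra (RF n) M],
    Nonempty (AdjoinRoot (toFracQ Fq) ≃ₐ[RF n] M) → IsStronglyGenuineExt n M

/-- An absolutely irreducible `F ∈ ℤ[Y,X₁,…,Xₙ]` is an `n`-genuine polynomial. -/
def IsGenuinePoly {n : ℕ} (F : Polynomial (MvPolynomial (Fin n) ℤ)) : Prop :=
  AbsIrred F ∧ GenuineExtOfQ (toQ F)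

/-- An absolutely irreducible `F ∈ ℤ[Y,X₁,…,Xₙ]` is a strongly `n`-genuine polynomial. -/
def IsStronglyGenuinePoly {n : ℕ} (F : Polynomial (MvPolynomial (Fin n) ℤ)) : Prop :=
  AbsIrred F ∧ StronglyGenuineExtOfQ (toQ F)

/-- The ring map `ℚ[X₁,…,Xₙ] → ℚ[X₁,…,Xₙ]` induced by the linear substitution
`Xᵢ ↦ Σⱼ σᵢⱼ Xⱼ`. -/
def lsubMv {n : ℕ} (σ : Matrix (Fin n) (Fin n) ℚ) :
    MvPolynomial (Fin n) ℚ →+* MvPolynomial (Fin n) ℚ :=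
  (MvPolynomial.aeval (R := ℚ)
    fun i => ∑ j, MvPolynomial.C (σ i j) * MvPolynomial.X j).toRingHom

/-- `F_σ(Y,X) := F(Y,σ(X))` for a linear change of variables `σ`. -/
def applyGL {n : ℕ} (σ : Matrix (Fin n) (Fin n) ℚ)
    (Fq : Polynomial (MvPolynomial (Fin n) ℚ)) : Polynomial (MvPolynomial (Fin n) ℚ) :=
  Fq.map (lsubMv σ)

/-- `F` is `(1,n)`-allowable: absolutely irreducible, monic in `Y`, and
`ℚ(X)[Y]/(F_σ)` is an `n`-genuine extension for every `σ ∈ GLₙ(ℚ)`. -/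
def IsAllowable {n : ℕ} (F : Polynomial (MvPolynomial (Fin n) ℤ)) : Prop :=
  AbsIrred F ∧ F.Monic ∧
    ∀ σ : Matrix (Fin n) (Fin n) ℚ, IsUnit σ.det → GenuineExtOfQ (applyGL σ (toQ F))

/-- `F` is strongly `(1,n)`-allowable: absolutely irreducible, monic in `Y`, and
`ℚ(X)[Y]/(F_σ)` is a strongly `n`-genuine extension for every `σ ∈ GLₙ(ℚ)`. -/
def IsStronglyAllowable {n : ℕ} (F : Polynomial (MvPolynomial (Fin n) ℤ)) : Prop :=
  AbsIrred F ∧ F.Monic ∧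
    ∀ σ : Matrix (Fin n) (Fin n) ℚ, IsUnit σ.det → StronglyGenuineExtOfQ (applyGL σ (toQ F))

/-- `F` has the form (1.2) with parameter `m`:
`F = Y^{md} + f₁(X) Y^{m(d-1)} + ⋯ + f_{d-1}(X) Y^m + f_d(X)` with `f_d ≠ 0`. -/
def HasForm (n m : ℕ) (F : Polynomial (MvPolynomial (Fin n) ℤ)) : Prop :=
  ∃ (d : ℕ) (f : ℕ → MvPolynomial (Fin n) ℤ), 1 ≤ d ∧ f d ≠ 0 ∧
    F = Polynomial.X ^ (m * d) +
      ∑ j ∈ Finset.Icc 1 d, Polynomial.C (f j) * Polynomial.X ^ (m * (d - j))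

/-- `P` has a linear factor in `Y`: `P = (Y − Q(X))·H̃(Y,X)`. -/
def HasLinearFactorY {n : ℕ} {R : Type*} [CommRing R]
    (P : Polynomial (MvPolynomial (Fin n) R)) : Prop :=
  ∃ (Q : MvPolynomial (Fin n) R) (H : Polynomial (MvPolynomial (Fin n) R)),
    P = (Polynomial.X - Polynomial.C Q) * H

/-- The canonical map `ℚ[X₁,…,Xₙ] → ℚ(X)[Y]/(F)`. -/
def structMap {n : ℕ} (F : Polynomial (MvPolynomial (Fin n) ℤ)) :
    MvPolynomial (Fin n) ℚ →+* AdjoinRoot (toFrac F) :=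
  (algebraMap (RF n) (AdjoinRoot (toFrac F))).comp
    (algebraMap (MvPolynomial (Fin n) ℚ) (RF n))

/-- `z ∈ ℚ(X)[Y]/(F)` lies in the subfield `ℚ((Xᵢ)_{i≠j})`: it can be written
as a quotient of two polynomials not involving `Xⱼ`. -/
def CoordMem {n : ℕ} (j : Fin n) (F : Polynomial (MvPolynomial (Fin n) ℤ))
    (z : AdjoinRoot (toFrac F)) : Prop :=
  ∃ a b : MvPolynomial (Fin n) ℚ,
    MvPolynomial.degreeOf j a = 0 ∧ MvPolynomial.degreeOf j b = 0 ∧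
    structMap F b ≠ 0 ∧ z * structMap F b = structMap F a

/-- `z ∈ ℚ(X)[Y]/(F)` is algebraic over the subfield `ℚ((Xᵢ)_{i≠j})`. -/
def AlgOverCoord {n : ℕ} (j : Fin n) (F : Polynomial (MvPolynomial (Fin n) ℤ))
    (z : AdjoinRoot (toFrac F)) : Prop :=
  ∃ P : Polynomial (AdjoinRoot (toFrac F)), P ≠ 0 ∧ (∀ k, CoordMem j F (P.coeff k)) ∧
    Polynomial.eval z P = 0

/-- Substitute `Xᵢ = xᵢ` for `i ∈ I` into `F`, over `ℚ̄`. -/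
def substSome {n : ℕ} (I : Finset (Fin n)) (x : Fin n → ℚ)
    (F : Polynomial (MvPolynomial (Fin n) ℤ)) :
    Polynomial (MvPolynomial (Fin n) (AlgebraicClosure ℚ)) :=
  (toQ F).map
    ((MvPolynomial.aeval (R := ℚ) fun i =>
      if i ∈ I then MvPolynomial.C (algebraMap ℚ (AlgebraicClosure ℚ) (x i))
      else MvPolynomial.X i).toRingHom)

/-- Substitute `Xᵢ = xᵢ` for all `i ≠ i₀` into `F`, over `ℚ̄`. -/
def substKeepFirst {n : ℕ} (i0 : Fin n) (x : {i : Fin n // i ≠ i0} → ℤ)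
    (F : Polynomial (MvPolynomial (Fin n) ℤ)) :
    Polynomial (MvPolynomial (Fin n) (AlgebraicClosure ℚ)) :=
  F.map
    ((MvPolynomial.aeval (R := ℤ) fun i =>
      if h : i = i0 then (MvPolynomial.X i : MvPolynomial (Fin n) (AlgebraicClosure ℚ))
      else MvPolynomial.C ((x ⟨i, h⟩ : ℤ) : AlgebraicClosure ℚ)).toRingHom)

/-- `‖L‖`: maximum absolute value of an entry of an integer matrix. -/
def matNorm {n : ℕ} (L : Matrix (Fin n) (Fin n) ℤ) : ℕ :=
  Finset.univ.sup fun p : Fin n × Fin n => (L p.1 p.2).natAbs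

/-- The standard additive character `e_p(a) = exp(2πi a/p)` on `ZMod p`. -/
def eZp (p : ℕ) (a : ZMod p) : ℂ :=
  Complex.exp (2 * Real.pi * Complex.I * (a.val : ℂ) / (p : ℂ))


/-- twisted circulant identity -/
theorem sp_circ {S : Type*} [CommRing S] (d k : ℕ) (hk : k < d) (s : ℕ → S) (F t : S) :
    (t ^ d - F) ∣ t ^ k * (∑ i ∈ Finset.range d, s i * t ^ i) -
      ∑ l ∈ Finset.range d, (if k ≤ l then s (l - k) else F * s (d + l - k)) * t ^ l := by
  obtain ⟨e, rfl⟩ := Nat.exists_eq_add_of_le hk.le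
  refine ⟨∑ l ∈ Finset.range k, s (e + l) * t ^ l, ?_⟩
  have h1 : ∑ l ∈ Finset.range (k + e),
      (if k ≤ l then s (l - k) else F * s (k + e + l - k)) * t ^ l =
      (∑ l ∈ Finset.range k, F * s (e + l) * t ^ l) +
        ∑ j ∈ Finset.range e, s j * t ^ (k + j) := by
    rw [Finset.sum_range_add]
    congr 1
    · refine Finset.sum_congr rfl fun l hl => ?_
      rw [Finset.mem_range] at hl
      rw [if_neg (by omega), show k + e + l - k = e + l by omega]
    · refine Finset.sum_congr rfl fun l hl => ?_
      rw [if_pos (by omega), show k + l - k = l by omega]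
  have h2 : t ^ k * (∑ i ∈ Finset.range (k + e), s i * t ^ i) =
      (∑ j ∈ Finset.range e, s j * t ^ (k + j)) +
        t ^ (k + e) * ∑ l ∈ Finset.range k, s (e + l) * t ^ l := by
    rw [add_comm k e, Finset.sum_range_add, mul_add, Finset.mul_sum, Finset.mul_sum, Finset.mul_sum]
    congr 1
    · refine Finset.sum_congr rfl fun l hl => ?_
      ring
    · refine Finset.sum_congr rfl fun l hl => ?_
      ring
  rw [h1, h2, sub_mul]
  have h3 : F * ∑ l ∈ Finset.range k, s (e + l) * t ^ l =
      ∑ l ∈ Finset.range k, F * s (e + l) * t ^ l := by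
    rw [Finset.mul_sum]
    refine Finset.sum_congr rfl fun l hl => ?_
    ring
  rw [h3]
  ring

theorem sp_prime {K : Type*} [Field K] (F : K[X]) (hsq : Squarefree F) (hF : 0 < F.natDegree)
    (d : ℕ) (hd : 1 ≤ d) : Prime ((X : K[X][X]) ^ d - C F) := by
  have hF0 : F ≠ 0 := by rintro rfl; simp at hF
  obtain ⟨π, hπ, hdiv⟩ := WfDvdMonoid.exists_irreducible_factor
    (Polynomial.not_isUnit_of_natDegree_pos F hF) hF0
  have hmonic : ((X : K[X][X]) ^ d - C F).Monic := monic_X_pow_sub_C F (by omega)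
  have hnd : ((X : K[X][X]) ^ d - C F).natDegree = d := natDegree_X_pow_sub_C
  have hdg : ((X : K[X][X]) ^ d - C F).degree = d := degree_X_pow_sub_C (by omega) F
  refine Irreducible.prime ?_
  refine irreducible_of_eisenstein_criterion (P := Ideal.span {π})
    ((Ideal.span_singleton_prime hπ.ne_zero).2 hπ.prime) ?_ ?_ ?_ ?_ hmonic.isPrimitive
  · rw [hmonic.leadingCoeff, Ideal.mem_span_singleton]
    exact fun h => hπ.not_isUnit (isUnit_of_dvd_one h)
  · intro n hn
    rw [hdg] at hn
    have hn' : n < d := by exact_mod_cast hn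
    rw [coeff_sub, coeff_X_pow, if_neg (by omega), coeff_C, Ideal.mem_span_singleton]
    split_ifs
    · simpa using hdiv
    · simp
  · rw [hdg]; exact_mod_cast hd
  · rw [coeff_sub, coeff_X_pow, if_neg (by omega), coeff_C_zero, zero_sub,
      Ideal.span_singleton_pow, Ideal.mem_span_singleton, dvd_neg, sq]
    exact fun h => hπ.not_isUnit (hsq π h)

theorem sp_core {K : Type*} [Field K] (F h : K[X]) (hsq : Squarefree F) (hF : 0 < F.natDegree)
    (d q B : ℕ) (hd : 1 ≤ d) (s : ℕ → K[X]) (hs : ∀ i, (s i).natDegree ≤ B)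
    (hdq : d * (F.natDegree + B) < q) (h1 : X ^ q ∣ h ^ d - F)
    (h2 : X ^ q ∣ ∑ i ∈ Finset.range d, s i * h ^ i) : ∀ i < d, s i = 0 := by
  classical
  let M : Matrix (Fin d) (Fin d) K[X] := fun k l =>
    if (k : ℕ) ≤ l then s (l - k) else F * s (d + l - k)
  have hMdeg : ∀ k l, (M k l).natDegree ≤ F.natDegree + B := by
    intro k l
    simp only [M]
    split_ifs
    · exact (hs _).trans (by omega)
    · exact natDegree_mul_le.trans (Nat.add_le_add_left (hs _) _)
  have hdet : M.det.natDegree ≤ d * (F.natDegree + B) := by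
    rw [Matrix.det_apply]
    refine natDegree_sum_le_of_forall_le _ _ fun σ _ => ?_
    have : (∏ i, M (σ i) i).natDegree ≤ d * (F.natDegree + B) := by
      refine (natDegree_prod_le _ _).trans ?_
      refine (Finset.sum_le_card_nsmul _ _ (F.natDegree + B) fun i _ => hMdeg _ _).trans ?_
      simp
    rcases Int.units_eq_one_or (Equiv.Perm.sign σ) with h | h <;> rw [h] <;> simpa using this
  let v : Fin d → K[X] := fun l => h ^ (l : ℕ)
  have hMv : ∀ k, X ^ q ∣ (M.mulVec v) k := by
    intro k
    have := sp_circ d k k.2 s F h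
    have h3 := (h1.trans this)
    have h4 : (M.mulVec v) k = ∑ l ∈ Finset.range d,
        (if (k : ℕ) ≤ l then s (l - k) else F * s (d + l - k)) * h ^ l := by
      rw [Finset.sum_range]; rfl
    rw [h4]
    exact (dvd_sub_right (h2.mul_left _)).1 h3
  have hdv : X ^ q ∣ M.det := by
    have e1 : M.adjugate.mulVec (M.mulVec v) = M.det • v := by
      rw [Matrix.mulVec_mulVec, Matrix.adjugate_mul, Matrix.smul_mulVec, Matrix.one_mulVec]
    have e2 := congrFun e1 ⟨0, hd⟩
    have e3 : (M.det • v) ⟨0, hd⟩ = M.det := by simp [v]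
    rw [← e3, ← e2]
    change X ^ q ∣ ∑ i, M.adjugate ⟨0, hd⟩ i * (M.mulVec v) i
    exact Finset.dvd_sum fun i _ => (hMv i).mul_left _
  have hdet0 : M.det = 0 := by
    by_contra hne
    have := natDegree_le_of_dvd hdv hne
    rw [natDegree_X_pow] at this
    omega
  obtain ⟨w, hw0, hw⟩ := Matrix.exists_vecMul_eq_zero_iff.2 hdet0
  let W : K[X][X] := ∑ k : Fin d, C (w k) * X ^ (k : ℕ)
  let S : K[X][X] := ∑ i ∈ Finset.range d, C (s i) * X ^ i
  have hP := sp_prime F hsq hF d hd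
  have hmonic : ((X : K[X][X]) ^ d - C F).Monic := monic_X_pow_sub_C F (by omega)
  have hdg : ((X : K[X][X]) ^ d - C F).degree = d := degree_X_pow_sub_C (by omega) F
  have hWS : (X ^ d - C F) ∣ W * S := by
    have e1 : W * S = ∑ k : Fin d, C (w k) * (X ^ (k : ℕ) * S -
        ∑ l ∈ Finset.range d, (if (k : ℕ) ≤ l then C (s (l - k)) else
          C F * C (s (d + l - k))) * X ^ l) := by
      simp only [mul_sub, Finset.sum_sub_distrib]
      have e2 : ∑ k : Fin d, C (w k) * ∑ l ∈ Finset.range d,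
          (if (k : ℕ) ≤ l then C (s (l - k)) else C F * C (s (d + l - k))) * X ^ l = 0 := by
        simp only [Finset.sum_range]
        simp only [Finset.mul_sum]
        rw [Finset.sum_comm]
        refine Finset.sum_eq_zero fun l _ => ?_
        have e3 := congrFun hw l
        have e4 : ∑ k : Fin d, w k * M k l = 0 := e3
        calc _ = C (∑ k : Fin d, w k * M k l) * X ^ (l : ℕ) := by
              rw [map_sum, Finset.sum_mul]
              refine Finset.sum_congr rfl fun k _ => ?_
              simp only [M]
              split_ifs <;> simp only [C_mul] <;> ring
          _ = 0 := by rw [e4]; simp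
      rw [e2, sub_zero]
      simp only [W, Finset.sum_mul]
      refine Finset.sum_congr rfl fun k _ => ?_
      ring
    rw [e1]
    refine Finset.dvd_sum fun k _ => Dvd.dvd.mul_left ?_ _
    exact sp_circ d k k.2 (fun i => C (s i)) (C F) X
  have hWc : ∀ k : Fin d, W.coeff k = w k := by
    intro k
    simp only [W, finsetSum_coeff, coeff_C_mul, coeff_X_pow]
    rw [Finset.sum_eq_single k]
    · simp
    · intro b _ hb
      rw [if_neg (fun h => hb (Fin.ext h.symm)), mul_zero]
    · simp
  have hSc : ∀ k < d, S.coeff k = s k := by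
    intro k hk
    simp only [S, finsetSum_coeff, coeff_C_mul, coeff_X_pow]
    rw [Finset.sum_eq_single k]
    · simp
    · intro b _ hb
      rw [if_neg (fun h => hb h.symm), mul_zero]
    · simp [hk]
  have hWd : W.degree < d := by
    refine (degree_lt_iff_coeff_zero _ _).2 fun m hm => ?_
    simp only [W, finsetSum_coeff, coeff_C_mul, coeff_X_pow]
    refine Finset.sum_eq_zero fun k _ => ?_
    rw [if_neg (by have := k.2; omega), mul_zero]
  have hSd : S.degree < d := by
    refine (degree_lt_iff_coeff_zero _ _).2 fun m hm => ?_
    simp only [S, finsetSum_coeff, coeff_C_mul, coeff_X_pow]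
    refine Finset.sum_eq_zero fun k hk => ?_
    rw [Finset.mem_range] at hk
    rw [if_neg (by omega), mul_zero]
  rcases hP.dvd_or_dvd hWS with h5 | h5
  · exfalso
    have : W = 0 := by
      by_contra hne
      exact hmonic.not_dvd_of_degree_lt hne (by rw [hdg]; exact hWd) h5
    apply hw0
    ext1 k
    rw [← hWc k, this]; simp
  · have : S = 0 := by
      by_contra hne
      exact hmonic.not_dvd_of_degree_lt hne (by rw [hdg]; exact hSd) h5
    intro i hi
    rw [← hSc i hi, this]; simp

theorem sp_nonvanish {p : ℕ} [Fact p.Prime] (f : (ZMod p)[X]) (hsq : Squarefree f)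
    (hf : 0 < f.natDegree) (h0 : f.coeff 0 ≠ 0) (d e B : ℕ) (hd : 1 ≤ d) (hde : d * e = p - 1)
    (hB : d * (f.natDegree + B) < p) (r : ℕ → (ZMod p)[X]) (hr : ∀ i, (r i).natDegree ≤ B)
    (hdiv : X ^ p ∣ ∑ i ∈ Finset.range d, r i * (f ^ e) ^ i) : ∀ i < d, r i = 0 := by
  have hp : p.Prime := Fact.out
  set c := f.coeff 0 with hc
  set g := f ^ e with hg
  have hfp : X ^ p ∣ f ^ p - C c := by
    have : f ^ p - C c = expand (ZMod p) p (f - C c) := by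
      rw [map_sub, ZMod.expand_card, expand_C]
    rw [this]
    have h1 : X ∣ f - C c := by
      rw [X_dvd_iff]; simp [hc]
    obtain ⟨k, hk⟩ := h1
    rw [hk, map_mul, expand_X]
    exact dvd_mul_right _ _
  have hfg : f * g ^ d = f ^ p := by
    rw [hg, ← pow_mul, mul_comm e d, hde, ← pow_succ']
    congr 1
    have := hp.pos
    omega
  obtain ⟨D, rfl⟩ : ∃ D, d = D + 1 := ⟨d - 1, by omega⟩
  set h := f * g ^ D with hh
  have hhg : h * g = f ^ p := by rw [← hfg, hh]; ring
  have hcu : c ^ D ≠ 0 := pow_ne_zero _ h0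
  set F := C (c ^ D) * f with hF
  have hFd : F.natDegree = f.natDegree := natDegree_C_mul hcu
  have hFsq : Squarefree F := by
    have hass : Associated f F := by
      refine ⟨(isUnit_C.2 (isUnit_iff_ne_zero.2 hcu)).unit, ?_⟩
      simp [hF, mul_comm]
    exact hass.squarefree_iff.1 hsq
  have hcong1 : X ^ p ∣ h ^ (D + 1) - F := by
    have e1 : h ^ (D + 1) = f * (f ^ p) ^ D := by
      rw [← hfg, hh]; ring
    have e2 : h ^ (D + 1) - F = f * ((f ^ p) ^ D - (C c) ^ D) := by
      rw [e1, hF, C_pow]; ring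
    rw [e2]
    exact ((hfp.trans (sub_dvd_pow_sub_pow _ _ _))).mul_left _
  have hcong2 : X ^ p ∣ ∑ i ∈ Finset.range (D + 1), (C (c ^ (D - i)) * r (D - i)) * h ^ i := by
    have e1 : X ^ p ∣ h ^ D * ∑ i ∈ Finset.range (D + 1), r i * g ^ i := hdiv.mul_left _
    have e2 : ∑ i ∈ Finset.range (D + 1), (C (c ^ (D - i)) * r (D - i)) * h ^ i =
        ∑ i ∈ Finset.range (D + 1), (C (c ^ i) * r i) * h ^ (D - i) := by
      rw [← Finset.sum_range_reflect]
      refine Finset.sum_congr rfl fun i hi => ?_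
      rw [Finset.mem_range] at hi
      have a1 : D + 1 - 1 - i = D - i := by omega
      have a2 : D - (D - i) = i := by omega
      rw [a1, a2]
    rw [e2]
    refine (dvd_sub_right e1).1 ?_
    rw [Finset.mul_sum, ← Finset.sum_sub_distrib]
    refine Finset.dvd_sum fun i hi => ?_
    rw [Finset.mem_range] at hi
    have e3 : h ^ D * (r i * g ^ i) - (C (c ^ i) * r i) * h ^ (D - i) =
        r i * h ^ (D - i) * ((f ^ p) ^ i - (C c) ^ i) := by
      rw [← hhg, C_pow, mul_pow h g i]
      have : h ^ D = h ^ (D - i) * h ^ i := by rw [← pow_add]; congr 1; omega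
      rw [this]; ring
    rw [e3]
    exact ((hfp.trans (sub_dvd_pow_sub_pow _ _ _))).mul_left _
  have key := sp_core F h hFsq (by omega) (D + 1) p B hd
    (fun i => C (c ^ (D - i)) * r (D - i))
    (fun i => (natDegree_C_mul_le _ _).trans (hr _)) (by rw [hFd]; exact hB) hcong1 hcong2
  intro i hi
  have := key (D - i) (by omega)
  rw [show D - (D - i) = i by omega] at this
  rcases mul_eq_zero.1 this with h | h
  · exact absurd (C_eq_zero.1 h) (pow_ne_zero _ h0)
  · exact h

/-- The operator describing the `k`-th derivative. -/
noncomputable def spT {K : Type*} [Field K] (f : K[X]) (l N : ℕ) : ℕ → (K[X] →ₗ[K] K[X])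
  | 0 => LinearMap.id
  | (k + 1) =>
    (LinearMap.mulLeft K (C ((l - k : ℕ) + N : K) * derivative f)) ∘ₗ spT f l N k +
      (LinearMap.mulLeft K f) ∘ₗ derivative ∘ₗ spT f l N k

theorem spT_succ {K : Type*} [Field K] (f : K[X]) (l N k : ℕ) (r : K[X]) :
    spT f l N (k + 1) r = C ((l - k : ℕ) + N : K) * derivative f * spT f l N k r +
      f * derivative (spT f l N k r) := by
  simp [spT, mul_assoc]

theorem spT_natDegree {K : Type*} [Field K] (f : K[X]) (l N B : ℕ) (r : K[X])
    (hr : r.natDegree ≤ B) (k : ℕ) : (spT f l N k r).natDegree ≤ B + k * f.natDegree := by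
  induction k with
  | zero => simpa [spT] using hr
  | succ k ih =>
    rw [spT_succ]
    refine natDegree_add_le_of_degree_le ?_ ?_
    · refine natDegree_mul_le.trans ?_
      have h1 : (C ((l - k : ℕ) + N : K) * derivative f).natDegree ≤ f.natDegree :=
        (natDegree_C_mul_le _ _).trans ((natDegree_derivative_le f).trans (by omega))
      calc _ ≤ f.natDegree + (B + k * f.natDegree) := add_le_add h1 ih
        _ = _ := by ring
    · refine natDegree_mul_le.trans ?_
      calc _ ≤ f.natDegree + (B + k * f.natDegree) :=
            add_le_add le_rfl ((natDegree_derivative_le _).trans (by omega))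
        _ = _ := by ring

theorem sp_deriv {p : ℕ} [Fact p.Prime] (f : (ZMod p)[X]) (l N j : ℕ) (r : (ZMod p)[X]) (k : ℕ)
    (hk : k ≤ l) :
    derivative^[k] (f ^ l * (r * f ^ N * X ^ (j * p))) =
      f ^ (l - k) * (spT f l N k r * f ^ N * X ^ (j * p)) := by
  have hpow : ∀ M : ℕ, f * derivative (f ^ M) = C (M : ZMod p) * derivative f * f ^ M := by
    intro M
    rcases M with _ | M
    · simp
    · rw [derivative_pow]
      simp only [Nat.add_sub_cancel]
      ring
  have hX : derivative ((X : (ZMod p)[X]) ^ (j * p)) = 0 := by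
    rw [derivative_X_pow]; simp
  induction k with
  | zero => simp [spT]
  | succ k ih =>
    rw [Function.iterate_succ_apply', ih (by omega), spT_succ]
    obtain ⟨u, hu⟩ : ∃ u, l - k = u + 1 := ⟨l - k - 1, by omega⟩
    rw [show l - (k + 1) = u by omega, hu]
    rw [derivative_mul, derivative_mul, hX, mul_zero, add_zero, derivative_mul, derivative_pow]
    simp only [Nat.add_sub_cancel, C_add]
    have := hpow N
    linear_combination (f ^ u * spT f l N k r * X ^ (j * p)) * this

theorem sp_count {p : ℕ} [Fact p.Prime] (f : (ZMod p)[X]) (hsq : Squarefree f)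
    (hf : 0 < f.natDegree) (h0 : f.coeff 0 ≠ 0) (d e : ℕ) (hd : 1 ≤ d) (hde : d * e = p - 1)
    (a : ZMod p) (l J B : ℕ) (hB : d * (f.natDegree + B) < p)
    (hcount : l * (B + J + l * f.natDegree) < d * J * B) (hl : l ≤ p) :
    l * (Finset.univ.filter fun x : ZMod p => (f.eval x) ^ e = a).card ≤
      l * f.natDegree + B + p * f.natDegree + J * p := by
  classical
  have hp : p.Prime := Fact.out
  have hBpos : 0 < B := by
    rcases Nat.eq_zero_or_pos B with h | h
    · subst h; simp at hcount
    · exact h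
  have hJpos : 0 < J := by
    rcases Nat.eq_zero_or_pos J with h | h
    · subst h; simp at hcount
    · exact h
  set m := f.natDegree with hm
  set N := B + J + l * m with hN
  let V := (Fin d × Fin J) → degreeLT (ZMod p) B
  let Q : ℕ → (V →ₗ[ZMod p] (ZMod p)[X]) := fun k =>
    ∑ ij : Fin d × Fin J, (LinearMap.mulLeft (ZMod p) (C (a ^ (ij.1 : ℕ)) * X ^ (ij.2 : ℕ))) ∘ₗ
      (spT f l (e * ij.1) k) ∘ₗ (degreeLT (ZMod p) B).subtype ∘ₗ LinearMap.proj ij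
  have hQ : ∀ k (v : V), Q k v = ∑ ij : Fin d × Fin J, C (a ^ (ij.1 : ℕ)) * X ^ (ij.2 : ℕ) *
      spT f l (e * ij.1) k (v ij : (ZMod p)[X]) := by
    intro k v
    simp only [Q, LinearMap.sum_apply, LinearMap.comp_apply, LinearMap.mulLeft_apply]
    rfl
  let Φ : V →ₗ[ZMod p] (Fin l × Fin N → ZMod p) :=
    LinearMap.pi fun kn => (lcoeff (ZMod p) (kn.2 : ℕ)) ∘ₗ Q kn.1
  have hrV : Module.finrank (ZMod p) V = d * J * B := by
    have hb := Module.finrank_eq_card_basis (degreeLT.basis (ZMod p) B)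
    rw [Module.finrank_pi_fintype]
    simp [hb]
  have : Module.Finite (ZMod p) (degreeLT (ZMod p) B) :=
    Module.Finite.of_basis (degreeLT.basis (ZMod p) B)
  have hker : LinearMap.ker Φ ≠ ⊥ := by
    refine LinearMap.ker_ne_bot_of_finrank_lt ?_
    rw [hrV]
    simpa using hcount
  obtain ⟨v, hvker, hv0⟩ := Submodule.exists_mem_ne_zero_of_ne_bot hker
  have hvdeg : ∀ ij, ((v ij : (ZMod p)[X])).natDegree ≤ B := by
    intro ij
    have := mem_degreeLT.1 (v ij).2
    exact natDegree_le_of_degree_le this.le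
  have hQ0 : ∀ k < l, Q k v = 0 := by
    intro k hk
    have hdeg : (Q k v).natDegree ≤ N - 1 := by
      rw [hQ]
      refine natDegree_sum_le_of_forall_le _ _ fun ij _ => ?_
      refine natDegree_mul_le.trans ?_
      have h1 : (C (a ^ (ij.1 : ℕ)) * X ^ (ij.2 : ℕ) : (ZMod p)[X]).natDegree ≤ ij.2 :=
        natDegree_C_mul_X_pow_le _ _
      have h2 := spT_natDegree f l (e * ij.1) B _ (hvdeg ij) k
      have h3 := ij.2.2
      have h4 : k * f.natDegree ≤ l * m := Nat.mul_le_mul_right _ hk.le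
      omega
    ext n
    rw [coeff_zero]
    by_cases hn : n < N
    · have := congrFun (LinearMap.mem_ker.1 hvker) (⟨k, hk⟩, ⟨n, hn⟩)
      simpa [Φ] using this
    · exact coeff_eq_zero_of_natDegree_lt (by omega)
  let A : (ZMod p)[X] := ∑ ij : Fin d × Fin J,
    (v ij : (ZMod p)[X]) * f ^ (e * ij.1) * X ^ ((ij.2 : ℕ) * p)
  let R : (ZMod p)[X] := f ^ l * A
  have hf0 : f ≠ 0 := by rintro rfl; simp [hm] at hf
  have hA : A ≠ 0 := by
    intro hA0
    apply hv0
    let r : ℕ → ℕ → (ZMod p)[X] := fun i j =>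
      if h : i < d ∧ j < J then (v (⟨i, h.1⟩, ⟨j, h.2⟩) : (ZMod p)[X]) else 0
    have hrd : ∀ i j, (r i j).natDegree ≤ B := by
      intro i j
      simp only [r]
      split_ifs
      · exact hvdeg _
      · simp
    have hA1 : A = ∑ j ∈ Finset.range J, X ^ (j * p) *
        ∑ i ∈ Finset.range d, r i j * (f ^ e) ^ i := by
      simp only [A]
      rw [Fintype.sum_prod_type, Finset.sum_comm, Finset.sum_range]
      refine Finset.sum_congr rfl fun j _ => ?_
      rw [Finset.sum_range, Finset.mul_sum]
      refine Finset.sum_congr rfl fun i _ => ?_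
      simp only [r]
      rw [dif_pos ⟨i.2, j.2⟩, pow_mul]
      ring
    have key : ∀ j < J, ∀ i < d, r i j = 0 := by
      intro j
      induction j using Nat.strong_induction_on with
      | _ j ih =>
      intro hj
      refine sp_nonvanish f hsq hf h0 d e B hd hde hB (fun i => r i j) (fun i => hrd i j) ?_
      have hX : X ^ (j * p + p) ∣ X ^ (j * p) * ∑ i ∈ Finset.range d, r i j * (f ^ e) ^ i := by
        have hs : X ^ (j * p) * ∑ i ∈ Finset.range d, r i j * (f ^ e) ^ i =
            - ∑ j' ∈ (Finset.range J).erase j, X ^ (j' * p) *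
              ∑ i ∈ Finset.range d, r i j' * (f ^ e) ^ i := by
          rw [eq_neg_iff_add_eq_zero,
            Finset.add_sum_erase _ (fun j' => X ^ (j' * p) *
              ∑ i ∈ Finset.range d, r i j' * (f ^ e) ^ i) (Finset.mem_range.2 hj), ← hA1, hA0]
        rw [hs, dvd_neg]
        refine Finset.dvd_sum fun j' hj' => ?_
        rw [Finset.mem_erase, Finset.mem_range] at hj'
        rcases lt_or_gt_of_ne hj'.1 with h | h
        · have : ∑ i ∈ Finset.range d, r i j' * (f ^ e) ^ i = 0 :=
            Finset.sum_eq_zero fun i hi => by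
              rw [ih j' h hj'.2 i (Finset.mem_range.1 hi), zero_mul]
          rw [this, mul_zero]
          exact dvd_zero _
        · refine Dvd.dvd.mul_right (pow_dvd_pow _ ?_) _
          calc j * p + p = (j + 1) * p := by ring
            _ ≤ j' * p := Nat.mul_le_mul_right _ h
      rw [pow_add] at hX
      exact (mul_dvd_mul_iff_left (pow_ne_zero _ X_ne_zero)).1 hX
    ext1 ij
    apply Subtype.ext
    have := key ij.2 ij.2.2 ij.1 ij.1.2
    simp only [r] at this
    rw [dif_pos ⟨ij.1.2, ij.2.2⟩] at this
    exact this
  have hR : R ≠ 0 := mul_ne_zero (pow_ne_zero _ hf0) hA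
  have hAdeg : A.natDegree ≤ B + p * m + J * p := by
    refine natDegree_sum_le_of_forall_le _ _ fun ij _ => ?_
    refine natDegree_mul_le.trans ?_
    refine add_le_add (natDegree_mul_le.trans (add_le_add (hvdeg ij) ?_)) ?_
    · refine natDegree_pow_le.trans ?_
      refine Nat.mul_le_mul_right _ ?_
      have : e * (ij.1 : ℕ) ≤ e * d := Nat.mul_le_mul_left _ ij.1.2.le
      rw [mul_comm e d] at this
      omega
    · rw [natDegree_X_pow]
      exact Nat.mul_le_mul_right _ ij.2.2.le
  have hRdeg : R.natDegree ≤ l * m + B + p * m + J * p := by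
    refine natDegree_mul_le.trans ?_
    have : (f ^ l).natDegree ≤ l * m := natDegree_pow_le
    omega
  have hmult : ∀ x : ZMod p, (f.eval x) ^ e = a → l ≤ R.rootMultiplicity x := by
    intro x hx
    rcases Nat.eq_zero_or_pos l with h | hlpos
    · omega
    have : l - 1 < R.rootMultiplicity x := by
      refine lt_rootMultiplicity_of_isRoot_iterate_derivative_of_mem_nonZeroDivisors hR ?_ ?_
      · intro k hk
        have hk' : k < l := by omega
        have e1 : derivative^[k] R = ∑ ij : Fin d × Fin J, f ^ (l - k) *
            (spT f l (e * ij.1) k (v ij : (ZMod p)[X]) * f ^ (e * ij.1) *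
              X ^ ((ij.2 : ℕ) * p)) := by
          simp only [R, A]
          rw [Finset.mul_sum, iterate_derivative_sum]
          refine Finset.sum_congr rfl fun ij _ => ?_
          exact sp_deriv f l _ _ _ k hk'.le
        rw [IsRoot.def, e1, eval_finsetSum]
        have e2 := congrArg (eval x) (hQ0 k hk')
        rw [hQ, eval_finsetSum, eval_zero] at e2
        calc _ = (f.eval x) ^ (l - k) * ∑ ij : Fin d × Fin J,
              eval x (C (a ^ (ij.1 : ℕ)) * X ^ (ij.2 : ℕ) *
                spT f l (e * ij.1) k (v ij : (ZMod p)[X])) := by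
              rw [Finset.mul_sum]
              refine Finset.sum_congr rfl fun ij _ => ?_
              simp only [eval_mul, eval_pow, eval_X, eval_C]
              rw [pow_mul (eval x f) e, hx, mul_comm (ij.2 : ℕ) p, pow_mul x p, ZMod.pow_card]
              ring
          _ = 0 := by rw [e2, mul_zero]
      · rw [mem_nonZeroDivisors_iff_ne_zero]
        intro h
        rw [ZMod.natCast_eq_zero_iff, hp.dvd_factorial] at h
        omega
    omega
  have hcard : l * (Finset.univ.filter fun x : ZMod p => (f.eval x) ^ e = a).card ≤
      R.natDegree := by
    refine le_trans ?_ (card_roots' R)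
    set S := Finset.univ.filter fun x : ZMod p => (f.eval x) ^ e = a with hS
    have hle : l • S.val ≤ R.roots := by
      rw [Multiset.le_iff_count]
      intro x
      rw [Multiset.count_nsmul, count_roots]
      by_cases hx : x ∈ S
      · have h1 : Multiset.count x S.val ≤ 1 := Multiset.nodup_iff_count_le_one.1 S.nodup x
        have h2 := hmult x (by simpa [hS] using hx)
        nlinarith
      · rw [Multiset.count_eq_zero_of_notMem hx]
        simp
    have := Multiset.card_le_card hle
    simpa using this
  exact hcard.trans hRdeg

theorem sp_bound0 (d D : ℕ) (hd : 1 ≤ d) :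
    ∃ P0 : ℕ, ∃ C1 : ℝ, 0 ≤ C1 ∧ ∀ (p : ℕ) [Fact p.Prime], P0 ≤ p → ∀ e : ℕ, d * e = p - 1 →
      ∀ f : (ZMod p)[X], Squarefree f → 0 < f.natDegree → f.natDegree ≤ D → f.coeff 0 ≠ 0 →
      ∀ a : ZMod p,
      (d : ℝ) * (Finset.univ.filter fun x : ZMod p => (f.eval x) ^ e = a).card ≤
        p + C1 * Real.sqrt p := by
  set t := 4 * d * (2 + d * D) + 1 with ht
  refine ⟨t ^ 2, d * D + 4 * (1 + D + t), by positivity, ?_⟩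
  intro p _ hP e hde f hsq hf hfD h0 a
  have hp : p.Prime := Fact.out
  set K := Nat.sqrt p with hK
  have hKt : t ≤ K := by rw [hK, Nat.le_sqrt']; exact hP
  have hK1 : K * K ≤ p := Nat.sqrt_le p
  have hK2 : p < (K + 1) * (K + 1) := Nat.lt_succ_sqrt p
  have hdt : 4 * d ≤ t := by
    rw [ht]
    have : 4 * d * 1 ≤ 4 * d * (2 + d * D) := Nat.mul_le_mul_left _ (by omega)
    omega
  have hdDt : 4 * d * (d * D) ≤ t := by
    rw [ht]
    have : 4 * d * (d * D) ≤ 4 * d * (2 + d * D) := Nat.mul_le_mul_left _ (by omega)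
    omega
  have htt : t ≤ p := by nlinarith
  have h2dt : 2 * d * D < p := by
    have : d * D ≤ d * (d * D) := by nlinarith [Nat.zero_le (d * D)]
    nlinarith
  set B := p / (2 * d) with hB
  have hB1 : 2 * d * B ≤ p := Nat.mul_div_le p (2 * d)
  have hB2 : p < 2 * d * (B + 1) := Nat.lt_mul_div_succ p (by omega)
  have hB4 : p ≤ 4 * d * B := by nlinarith
  set m := f.natDegree with hm
  have hcond1 : d * (m + B) < p := by nlinarith
  have hcond2 : (d * K) * (B + (K + t) + (d * K) * m) < d * (K + t) * B := by
    have h1 : K * (K + t + d * K * m) < t * B := by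
      have h2 : K * (K + t + d * K * m) ≤ K * K * (2 + d * D) := by
        have : d * K * m ≤ d * K * D := Nat.mul_le_mul_left _ hfD
        nlinarith
      have h3 : K * K * (2 + d * D) ≤ p * (2 + d * D) := Nat.mul_le_mul_right _ hK1
      have h4 : 4 * d * (p * (2 + d * D)) < 4 * d * (t * B) := by
        calc 4 * d * (p * (2 + d * D)) = p * (t - 1) := by rw [ht]; simp; ring
          _ < p * t := by
            apply Nat.mul_lt_mul_of_pos_left _ hp.pos
            omega
          _ ≤ (4 * d * B) * t := Nat.mul_le_mul_right _ hB4
          _ = _ := by ring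
      have h5 := Nat.lt_of_mul_lt_mul_left h4
      omega
    have h6 : d * (K * (K + t + d * K * m)) < d * (t * B) := Nat.mul_lt_mul_of_pos_left h1 (by omega)
    linarith
  have hcond3 : d * K ≤ p := by
    have : d * K ≤ K * K := Nat.mul_le_mul_right _ (by omega)
    omega
  have key := sp_count f hsq hf h0 d e hd hde a (d * K) (K + t) B hcond1 hcond2 hcond3
  set n := (Finset.univ.filter fun x : ZMod p => (f.eval x) ^ e = a).card with hn
  have key2 : d * K * n ≤ K * p + d * K * D + p * (1 + D + t) := by
    have hBp : B ≤ p := Nat.div_le_self _ _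
    have : d * K * m ≤ d * K * D := Nat.mul_le_mul_left _ hfD
    have : p * m ≤ p * D := Nat.mul_le_mul_left _ hfD
    linarith
  have hKpos : 0 < K := by omega
  have hp4 : p ≤ 4 * K * K := by nlinarith
  have key3 : K * (d * n) ≤ K * (p + d * D + 4 * K * (1 + D + t)) := by
    have : p * (1 + D + t) ≤ 4 * K * K * (1 + D + t) := Nat.mul_le_mul_right _ hp4
    linarith
  have key4 := Nat.le_of_mul_le_mul_left key3 hKpos
  have key5 : (d : ℝ) * n ≤ p + d * D + 4 * K * (1 + D + t) := by exact_mod_cast key4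
  have hs : (K : ℝ) ≤ Real.sqrt p := by
    apply Real.le_sqrt_of_sq_le
    rw [sq]; exact_mod_cast hK1
  have hs1 : (1 : ℝ) ≤ Real.sqrt p := by
    rw [Real.one_le_sqrt]; exact_mod_cast hp.one_le
  have e1 : (d : ℝ) * D ≤ d * D * Real.sqrt p := le_mul_of_one_le_right (by positivity) hs1
  have e2 : 4 * (K : ℝ) * (1 + D + t) ≤ 4 * Real.sqrt p * (1 + D + t) := by gcongr
  linarith

theorem sp_bound (d D : ℕ) (hd : 1 ≤ d) :
    ∃ P0 : ℕ, ∃ C1 : ℝ, 0 ≤ C1 ∧ ∀ (p : ℕ) [Fact p.Prime], P0 ≤ p → ∀ e : ℕ, d * e = p - 1 →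
      ∀ f : (ZMod p)[X], f.Separable → 0 < f.natDegree → f.natDegree ≤ D →
      ∀ a : ZMod p,
      (d : ℝ) * (Finset.univ.filter fun x : ZMod p => (f.eval x) ^ e = a).card ≤
        p + C1 * Real.sqrt p := by
  obtain ⟨P0, C1, hC1, h⟩ := sp_bound0 d D hd
  refine ⟨max P0 (D + 1), C1, hC1, ?_⟩
  intro p _ hP e hde f hsep hf hfD a
  have hf0 : f ≠ 0 := by rintro rfl; simp at hf
  obtain ⟨b, hb⟩ : ∃ b : ZMod p, f.eval b ≠ 0 := by
    by_contra hcon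
    push Not at hcon
    apply hf0
    refine eq_zero_of_natDegree_lt_card_of_eval_eq_zero' f Finset.univ (fun i _ => hcon i) ?_
    rw [Finset.card_univ, ZMod.card]
    have := le_max_right P0 (D + 1)
    omega
  set F := f.comp (X + C b) with hF
  have hFsep : F.Separable := by
    obtain ⟨u, v, huv⟩ := hsep
    refine ⟨u.comp (X + C b), v.comp (X + C b), ?_⟩
    have := congrArg (fun q => q.comp (X + C b)) huv
    simp only [add_comp, mul_comp, one_comp] at this
    rw [hF, derivative_comp]
    simpa using this
  have hFd : F.natDegree = f.natDegree := by
    rw [hF, natDegree_comp, natDegree_X_add_C, mul_one]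
  have hF0 : F.coeff 0 ≠ 0 := by
    rw [coeff_zero_eq_eval_zero, hF, eval_comp]
    simpa using hb
  have := h p ((le_max_left _ _).trans hP) e hde F hFsep.squarefree (by omega) (by omega) hF0 a
  have hc : (Finset.univ.filter fun x : ZMod p => (F.eval x) ^ e = a).card =
      (Finset.univ.filter fun x : ZMod p => (f.eval x) ^ e = a).card := by
    refine Finset.card_equiv (Equiv.addRight b) fun x => ?_
    simp [hF, eval_comp]
  rwa [hc] at this

theorem sp_ker {p : ℕ} [Fact p.Prime] (χ : MulChar (ZMod p) ℂ) (d e : ℕ) (hχ : orderOf χ = d)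
    (hde : d * e = p - 1) (z : (ZMod p)ˣ) (hz : χ z = 1) : z ^ e = 1 := by
  obtain ⟨γ, hγ⟩ := IsCyclic.exists_generator (α := (ZMod p)ˣ)
  obtain ⟨k, rfl⟩ := (Submonoid.mem_powers_iff _ _).1 ((mem_powers_iff_mem_zpowers).2 (hγ z))
  have h1 : χ ^ k = 1 := by
    apply MulChar.ext
    intro y
    obtain ⟨j, rfl⟩ := (Submonoid.mem_powers_iff _ _).1 ((mem_powers_iff_mem_zpowers).2 (hγ y))
    rw [MulChar.pow_apply_coe, MulChar.one_apply_coe]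
    push_cast at hz ⊢
    rw [map_pow] at hz ⊢
    rw [← pow_mul, mul_comm, pow_mul, hz, one_pow]
  obtain ⟨j, rfl⟩ : d ∣ k := by rw [← hχ]; exact orderOf_dvd_of_pow_eq_one h1
  rw [← pow_mul, show d * j * e = (p - 1) * j by rw [← hde]; ring, pow_mul,
    ZMod.units_pow_card_sub_one_eq_one, one_pow]

theorem sp_weil (d D : ℕ) (hd : 2 ≤ d) :
    ∃ C : ℝ, 0 ≤ C ∧ ∀ (p : ℕ) [Fact p.Prime],
      ∀ f : (ZMod p)[X], f.Separable → 0 < f.natDegree → f.natDegree ≤ D →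
      ∀ χ : MulChar (ZMod p) ℂ, orderOf χ = d →
      ‖∑ x : ZMod p, χ (f.eval x)‖ ≤ C * Real.sqrt p := by
  classical
  obtain ⟨P0, C1, hC1, hb⟩ := sp_bound d D (by omega)
  refine ⟨Real.sqrt P0 + C1 + D, by positivity, ?_⟩
  intro p _ f hsep hf hfD χ hχ
  have hp : p.Prime := Fact.out
  have hs1 : (1 : ℝ) ≤ Real.sqrt p := by
    rw [Real.one_le_sqrt]; exact_mod_cast hp.one_le
  by_cases hP : P0 ≤ p
  swap
  · have h1 : ‖∑ x : ZMod p, χ (f.eval x)‖ ≤ p := by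
      refine (norm_sum_le _ _).trans ?_
      refine (Finset.sum_le_card_nsmul _ _ 1 fun x _ => ?_).trans ?_
      · exact DirichletCharacter.norm_le_one χ _
      · simp
    have h2 : (p : ℝ) = Real.sqrt p * Real.sqrt p := (Real.mul_self_sqrt (by positivity)).symm
    have h3 : Real.sqrt p ≤ Real.sqrt P0 := Real.sqrt_le_sqrt (by exact_mod_cast (not_le.1 hP).le)
    have h4 : 0 ≤ (D : ℝ) := by positivity
    calc _ ≤ (p : ℝ) := h1
      _ = Real.sqrt p * Real.sqrt p := h2
      _ ≤ (Real.sqrt P0 + C1 + D) * Real.sqrt p := by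
        apply mul_le_mul_of_nonneg_right _ (by positivity)
        linarith
  have hdvd : d ∣ p - 1 := by
    have := MulChar.orderOf_dvd_card_sub_one (χ := χ)
    rwa [hχ, ZMod.card] at this
  obtain ⟨e, he⟩ := hdvd
  have hb' := hb p hP e he.symm f hsep hf hfD
  set ζ : ℂ := Complex.exp (2 * Real.pi * Complex.I / d) with hζ
  have hprim : IsPrimitiveRoot ζ d := Complex.isPrimitiveRoot_exp d (by omega)
  have hinj : Set.InjOn (fun j => ζ ^ j) (Finset.range d : Set ℕ) := by
    intro i hi j hj hij
    exact hprim.pow_inj (by simpa using hi) (by simpa using hj) hij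
  set Ω : Finset ℂ := (Finset.range d).image fun j => ζ ^ j with hΩ
  have hΩsum : ∑ ω ∈ Ω, ω = 0 := by
    rw [hΩ, Finset.sum_image hinj]
    exact hprim.geom_sum_eq_zero (by omega)
  have hΩcard : Ω.card = d := by
    rw [hΩ, Finset.card_image_of_injOn hinj, Finset.card_range]
  have hΩnorm : ∀ ω ∈ Ω, ‖ω‖ = 1 := by
    intro ω hω
    obtain ⟨j, _, rfl⟩ := Finset.mem_image.1 hω
    simp [hprim.norm'_eq_one (by omega)]
  set S : Finset (ZMod p) := Finset.univ.filter fun x => f.eval x ≠ 0 with hS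
  have hmap : ∀ x ∈ S, χ (f.eval x) ∈ Ω := by
    intro x hx
    have hx' : f.eval x ≠ 0 := by simpa [hS] using hx
    have : χ (f.eval x) ^ d = 1 := by
      rw [← MulChar.pow_apply' χ (by omega), ← hχ, pow_orderOf_eq_one, MulChar.one_apply hx'.isUnit]
    have hnz : NeZero d := ⟨by omega⟩
    obtain ⟨j, hj, hje⟩ := hprim.eq_pow_of_pow_eq_one this
    exact Finset.mem_image.2 ⟨j, Finset.mem_range.2 hj, hje⟩
  have hsum : ∑ x : ZMod p, χ (f.eval x) =
      ∑ ω ∈ Ω, ((S.filter fun x => χ (f.eval x) = ω).card : ℂ) * ω := by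
    have e1 : ∑ x : ZMod p, χ (f.eval x) = ∑ x ∈ S, χ (f.eval x) := by
      symm
      refine Finset.sum_subset (Finset.subset_univ _) fun x _ hx => ?_
      have hx' : f.eval x = 0 := by simpa [hS] using hx
      rw [hx', MulChar.map_zero]
    rw [e1, ← Finset.sum_fiberwise_of_maps_to hmap]
    refine Finset.sum_congr rfl fun ω _ => ?_
    rw [Finset.sum_congr rfl (fun x hx => (Finset.mem_filter.1 hx).2), Finset.sum_const,
      nsmul_eq_mul]
  have hcardS : S.card = ∑ ω ∈ Ω, (S.filter fun x => χ (f.eval x) = ω).card :=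
    Finset.card_eq_sum_card_fiberwise hmap
  have hSlow : (p : ℝ) - D ≤ S.card := by
    have h1 : S.card + (Finset.univ.filter fun x : ZMod p => ¬ f.eval x ≠ 0).card = p := by
      have := Finset.card_filter_add_card_filter_not (s := (Finset.univ : Finset (ZMod p)))
        (fun x => f.eval x ≠ 0)
      rw [hS, this, Finset.card_univ, ZMod.card]
    have hf0 : f ≠ 0 := by rintro rfl; simp at hf
    have h2 : (Finset.univ.filter fun x : ZMod p => ¬ f.eval x ≠ 0).card ≤ D := by
      refine le_trans ?_ hfD
      refine card_le_degree_of_subset_roots (p := f) ?_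
      intro x hx
      have : f.eval x = 0 := by simpa using hx
      exact (mem_roots hf0).2 this
    have h3 : p ≤ S.card + D := by omega
    have : (p : ℝ) ≤ S.card + D := by exact_mod_cast h3
    linarith
  set M : ℝ := (p + C1 * Real.sqrt p) / d with hM
  have hdpos : (0 : ℝ) < d := by positivity
  have hfib : ∀ ω ∈ Ω, ((S.filter fun x => χ (f.eval x) = ω).card : ℝ) ≤ M := by
    intro ω hω
    rcases (S.filter fun x => χ (f.eval x) = ω).eq_empty_or_nonempty with h | ⟨x0, hx0⟩
    · rw [h, hM]; simp; positivity
    · rw [Finset.mem_filter] at hx0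
      have hx00 : f.eval x0 ≠ 0 := by simpa [hS] using hx0.1
      have hsub : (S.filter fun x => χ (f.eval x) = ω) ⊆
          Finset.univ.filter fun x : ZMod p => (f.eval x) ^ e = (f.eval x0) ^ e := by
        intro x hx
        rw [Finset.mem_filter] at hx
        have hxx : f.eval x ≠ 0 := by simpa [hS] using hx.1
        rw [Finset.mem_filter]
        refine ⟨Finset.mem_univ _, ?_⟩
        have hω0 : ω ≠ 0 := by
          intro h0
          have := hΩnorm ω hω
          rw [h0] at this
          simp at this
        have hk := sp_ker χ d e hχ he.symm (Units.mk0 _ hxx * (Units.mk0 _ hx00)⁻¹) (by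
          have h5 : χ (f.eval x) = χ (((Units.mk0 _ hxx * (Units.mk0 _ hx00)⁻¹ : (ZMod p)ˣ)) : ZMod p) * χ (f.eval x0) := by
            rw [← map_mul]
            congr 1
            simp [hx00]
          rw [hx.2, hx0.2] at h5
          exact (mul_right_cancel₀ hω0 (by rw [one_mul]; exact h5)).symm)
        rw [mul_pow, inv_pow, mul_inv_eq_one] at hk
        have := congrArg Units.val hk
        simpa using this
      have h1 := Finset.card_le_card hsub
      rw [hM, le_div_iff₀ hdpos, mul_comm]
      refine le_trans ?_ (hb' ((f.eval x0) ^ e))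
      gcongr
  have hfinal : ∑ x : ZMod p, χ (f.eval x) =
      ∑ ω ∈ Ω, (((S.filter fun x => χ (f.eval x) = ω).card : ℂ) - (M : ℂ)) * ω := by
    simp only [sub_mul, Finset.sum_sub_distrib]
    rw [← Finset.mul_sum, hΩsum, mul_zero, sub_zero, hsum]
  rw [hfinal]
  refine (norm_sum_le _ _).trans ?_
  have h6 : ∀ ω ∈ Ω, ‖(((S.filter fun x => χ (f.eval x) = ω).card : ℂ) - (M : ℂ)) * ω‖ =
      M - ((S.filter fun x => χ (f.eval x) = ω).card : ℝ) := by
    intro ω hω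
    rw [norm_mul, hΩnorm ω hω, mul_one]
    rw [← Complex.ofReal_natCast, ← Complex.ofReal_sub, Complex.norm_real, Real.norm_eq_abs,
      abs_sub_comm, abs_of_nonneg (sub_nonneg.2 (hfib ω hω))]
  rw [Finset.sum_congr rfl h6, Finset.sum_sub_distrib, Finset.sum_const, hΩcard, nsmul_eq_mul]
  have h7 : (d : ℝ) * M = p + C1 * Real.sqrt p := by
    rw [hM]; field_simp
  have h8 : (∑ ω ∈ Ω, ((S.filter fun x => χ (f.eval x) = ω).card : ℝ)) = S.card := by
    rw [hcardS]; push_cast; rfl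
  rw [h7, h8]
  have h9 : (D : ℝ) ≤ D * Real.sqrt p := le_mul_of_one_le_right (by positivity) hs1
  have h10 : 0 ≤ Real.sqrt P0 * Real.sqrt p := by positivity
  nlinarith

theorem pv_eZp {p : ℕ} [NeZero p] (a : ZMod p) : eZp p a = ZMod.stdAddChar a := by
  rw [eZp, ZMod.stdAddChar_apply, ZMod.toCircle_apply]

theorem pv_orth {p : ℕ} [Fact p.Prime] (k : ℕ) (z : Fin k → ZMod p) :
    ∑ u : Fin k → ZMod p, (ZMod.stdAddChar (∑ i, u i * z i) : ℂ) =
      if z = 0 then (p : ℂ) ^ k else 0 := by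
  classical
  have h1 : ∀ u : Fin k → ZMod p, (ZMod.stdAddChar (∑ i, u i * z i) : ℂ) =
      ∏ i, (ZMod.stdAddChar (u i * z i) : ℂ) := by
    intro u
    induction (Finset.univ : Finset (Fin k)) using Finset.induction_on with
    | empty => simp
    | insert a s ha ih => rw [Finset.sum_insert ha, Finset.prod_insert ha, AddChar.map_add_eq_mul, ih]
  simp only [h1]
  have h2 := Finset.prod_univ_sum (fun _ : Fin k => (Finset.univ : Finset (ZMod p)))
    (fun i a => (ZMod.stdAddChar (a * z i) : ℂ))
  rw [Fintype.piFinset_univ] at h2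
  rw [← h2]
  have h3 : ∀ i, ∑ a : ZMod p, (ZMod.stdAddChar (a * z i) : ℂ) =
      if z i = 0 then (p : ℂ) else 0 := by
    intro i
    have := AddChar.sum_mulShift (z i) (ZMod.isPrimitive_stdAddChar p)
    rw [this]
    simp [ZMod.card]
  simp only [h3]
  split_ifs with hz
  · subst hz; simp
  · obtain ⟨i, hi⟩ : ∃ i, z i ≠ 0 := by
      by_contra hcon
      push Not at hcon
      exact hz (funext hcon)
    exact Finset.prod_eq_zero (Finset.mem_univ i) (if_neg hi)

theorem pv_parseval {p : ℕ} [Fact p.Prime] (k : ℕ) (G : (Fin k → ZMod p) → ℂ) :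
    ∑ u : Fin k → ZMod p, ‖∑ x, G x * eZp p (∑ i, u i * x i)‖ ^ 2 =
      (p : ℝ) ^ k * ∑ x, ‖G x‖ ^ 2 := by
  classical
  have hC : ((∑ u : Fin k → ZMod p, ‖∑ x, G x * eZp p (∑ i, u i * x i)‖ ^ 2 : ℝ) : ℂ) =
      (((p : ℝ) ^ k * ∑ x, ‖G x‖ ^ 2 : ℝ) : ℂ) := by
    push_cast
    have h1 : ∀ u : Fin k → ZMod p, ((‖∑ x, G x * eZp p (∑ i, u i * x i)‖ : ℝ) : ℂ) ^ 2 =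
        ∑ x, ∑ y, G x * (starRingEnd ℂ) (G y) *
          (ZMod.stdAddChar (∑ i, u i * (x - y) i) : ℂ) := by
      intro u
      rw [← Complex.mul_conj', map_sum, Finset.sum_mul_sum]
      refine Finset.sum_congr rfl fun x _ => Finset.sum_congr rfl fun y _ => ?_
      rw [pv_eZp, pv_eZp, map_mul, ← AddChar.map_neg_eq_conj]
      have : ∑ i, u i * (x - y) i = ∑ i, u i * x i + -∑ i, u i * y i := by
        rw [← sub_eq_add_neg, ← Finset.sum_sub_distrib]
        exact Finset.sum_congr rfl fun i _ => by simp [mul_sub]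
      rw [this, AddChar.map_add_eq_mul]
      ring
    simp only [h1]
    rw [Finset.sum_comm]
    rw [Finset.mul_sum]
    refine Finset.sum_congr rfl fun x _ => ?_
    rw [Finset.sum_comm]
    simp only [← Finset.mul_sum, pv_orth, sub_eq_zero]
    simp only [mul_ite, mul_zero]
    rw [Finset.sum_ite_eq]
    simp only [Finset.mem_univ, if_true]
    rw [Complex.mul_conj']
    ring
  exact_mod_cast hC

theorem pv_slice {p : ℕ} [Fact p.Prime] (k : ℕ) (Φ : (Fin (k + 1) → ZMod p) → ℂ) :
    ∑ u ∈ Finset.univ.filter (fun u : Fin (k + 1) → ZMod p => u 0 = 0),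
      ‖∑ x : Fin (k + 1) → ZMod p, Φ x * eZp p (∑ i, u i * x i)‖ ^ 2 =
    (p : ℝ) ^ k * ∑ x' : Fin k → ZMod p, ‖∑ x0 : ZMod p, Φ (Fin.cons x0 x')‖ ^ 2 := by
  classical
  rw [← pv_parseval]
  symm
  refine Finset.sum_bij (fun u' _ => (Fin.cons 0 u' : Fin (k + 1) → ZMod p)) ?_ ?_ ?_ ?_
  · intro u' _; simp
  · intro a _ b _ hab
    exact (Fin.cons_injective2 hab).2
  · intro u hu
    have hu' : u 0 = 0 := by simpa using hu
    refine ⟨Fin.tail u, Finset.mem_univ _, ?_⟩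
    rw [← hu']; exact Fin.cons_self_tail u
  · intro u' _
    congr 2
    rw [← (Fin.consEquiv (fun _ : Fin (k + 1) => ZMod p)).sum_comp, Fintype.sum_prod_type,
      Finset.sum_comm]
    refine Finset.sum_congr rfl fun x' _ => ?_
    rw [Finset.sum_mul]
    refine Finset.sum_congr rfl fun x0 _ => ?_
    simp [Fin.consEquiv, Fin.sum_univ_succ]

/-- Sum of the absolute values of the coefficients. -/
def dd_l1 {k : ℕ} (g : MvPolynomial (Fin k) ℤ) : ℕ := ∑ m ∈ g.support, (g.coeff m).natAbs

theorem dd_l1_superset {k : ℕ} (g : MvPolynomial (Fin k) ℤ) (S : Finset (Fin k →₀ ℕ))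
    (h : g.support ⊆ S) : dd_l1 g = ∑ m ∈ S, (g.coeff m).natAbs := by
  refine Finset.sum_subset h fun m _ hm => ?_
  rw [MvPolynomial.notMem_support_iff.1 hm]; rfl

theorem dd_l1_zero {k : ℕ} : dd_l1 (0 : MvPolynomial (Fin k) ℤ) = 0 := by simp [dd_l1]

theorem dd_l1_add {k : ℕ} (f g : MvPolynomial (Fin k) ℤ) :
    dd_l1 (f + g) ≤ dd_l1 f + dd_l1 g := by
  classical
  rw [dd_l1_superset (f + g) (f.support ∪ g.support) MvPolynomial.support_add,
    dd_l1_superset f (f.support ∪ g.support) Finset.subset_union_left,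
    dd_l1_superset g (f.support ∪ g.support) Finset.subset_union_right, ← Finset.sum_add_distrib]
  refine Finset.sum_le_sum fun m _ => ?_
  rw [MvPolynomial.coeff_add]
  exact Int.natAbs_add_le _ _

theorem dd_l1_sum {k : ℕ} {ι : Type*} (s : Finset ι) (f : ι → MvPolynomial (Fin k) ℤ) :
    dd_l1 (∑ i ∈ s, f i) ≤ ∑ i ∈ s, dd_l1 (f i) := by
  classical
  induction s using Finset.induction_on with
  | empty => simp [dd_l1_zero]
  | insert a s ha ih =>
    rw [Finset.sum_insert ha, Finset.sum_insert ha]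
    exact (dd_l1_add _ _).trans (by lia)

theorem dd_l1_monomial {k : ℕ} (m : Fin k →₀ ℕ) (a : ℤ) :
    dd_l1 (MvPolynomial.monomial m a) = a.natAbs := by
  classical
  rw [dd_l1_superset _ {m} MvPolynomial.support_monomial_subset]
  simp

theorem dd_l1_mul {k : ℕ} (f g : MvPolynomial (Fin k) ℤ) :
    dd_l1 (f * g) ≤ dd_l1 f * dd_l1 g := by
  have h : f * g = ∑ m ∈ f.support, ∑ n ∈ g.support,
      MvPolynomial.monomial (m + n) (f.coeff m * g.coeff n) := by
    conv_lhs => rw [f.as_sum, g.as_sum, Finset.sum_mul_sum]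
    refine Finset.sum_congr rfl fun m _ => Finset.sum_congr rfl fun n _ => ?_
    rw [MvPolynomial.monomial_mul]
  rw [h]
  refine (dd_l1_sum _ _).trans ?_
  rw [dd_l1, dd_l1, Finset.sum_mul_sum]
  refine Finset.sum_le_sum fun m _ => (dd_l1_sum _ _).trans (Finset.sum_le_sum fun n _ => ?_)
  rw [dd_l1_monomial, Int.natAbs_mul]

theorem dd_l1_C {k : ℕ} (a : ℤ) : dd_l1 (MvPolynomial.C a : MvPolynomial (Fin k) ℤ) = a.natAbs :=
  dd_l1_monomial 0 a

theorem dd_l1_prod {k : ℕ} {ι : Type*} (s : Finset ι) (f : ι → MvPolynomial (Fin k) ℤ) :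
    dd_l1 (∏ i ∈ s, f i) ≤ ∏ i ∈ s, dd_l1 (f i) := by
  classical
  induction s using Finset.induction_on with
  | empty =>
    simp only [Finset.prod_empty]
    have := dd_l1_C (k := k) 1
    rw [map_one] at this
    rw [this]; rfl
  | insert a s ha ih =>
    rw [Finset.prod_insert ha, Finset.prod_insert ha]
    exact (dd_l1_mul _ _).trans (Nat.mul_le_mul_left _ ih)

theorem dd_coeff_le_l1 {k : ℕ} (g : MvPolynomial (Fin k) ℤ) (m : Fin k →₀ ℕ) :
    (g.coeff m).natAbs ≤ dd_l1 g := by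
  by_cases hm : m ∈ g.support
  · exact Finset.single_le_sum (f := fun m => (g.coeff m).natAbs) (fun _ _ => Nat.zero_le _) hm
  · rw [MvPolynomial.notMem_support_iff.1 hm]; simp

theorem dd_det {k N b t : ℕ} (M : Matrix (Fin N) (Fin N) (MvPolynomial (Fin k) ℤ))
    (h1 : ∀ i j, dd_l1 (M i j) ≤ b) (h2 : ∀ i j, (M i j).totalDegree ≤ t) :
    dd_l1 M.det ≤ N.factorial * b ^ N ∧ M.det.totalDegree ≤ N * t := by
  have hs : ∀ σ : Equiv.Perm (Fin N), (Equiv.Perm.sign σ • ∏ i, M (σ i) i) =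
      MvPolynomial.C ((Equiv.Perm.sign σ : ℤˣ) : ℤ) * ∏ i, M (σ i) i := by
    intro σ
    rcases Int.units_eq_one_or (Equiv.Perm.sign σ) with h | h <;> simp [h]
  rw [Matrix.det_apply]
  constructor
  · refine (dd_l1_sum _ _).trans ?_
    have : ∀ σ ∈ (Finset.univ : Finset (Equiv.Perm (Fin N))),
        dd_l1 (Equiv.Perm.sign σ • ∏ i, M (σ i) i) ≤ b ^ N := by
      intro σ _
      rw [hs]
      refine (dd_l1_mul _ _).trans ?_
      rw [dd_l1_C, Int.units_natAbs, one_mul]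
      refine (dd_l1_prod _ _).trans ?_
      refine (Finset.prod_le_prod' fun i _ => h1 (σ i) i).trans ?_
      simp
    refine (Finset.sum_le_card_nsmul _ _ _ this).trans ?_
    simp [Fintype.card_perm]
  · refine MvPolynomial.totalDegree_finsetSum_le fun σ _ => ?_
    rw [hs]
    refine (MvPolynomial.totalDegree_mul _ _).trans ?_
    rw [MvPolynomial.totalDegree_C, zero_add]
    refine (MvPolynomial.totalDegree_finsetProd _ _).trans ?_
    refine (Finset.sum_le_card_nsmul _ _ _ (fun i _ => h2 (σ i) i)).trans ?_
    simp

theorem dd_card {k D : ℕ} (g : MvPolynomial (Fin k) ℤ) (h : g.totalDegree ≤ D) :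
    g.support.card ≤ (D + 1) ^ k := by
  classical
  have : (Fintype.piFinset fun _ : Fin k => Finset.range (D + 1)).card = (D + 1) ^ k := by simp
  rw [← this]
  refine Finset.card_le_card_of_injOn (fun m => (m : Fin k → ℕ)) ?_ ?_
  · intro m hm
    simp only [SetLike.mem_coe, Fintype.mem_piFinset, Finset.mem_range]
    intro i
    have h1 := MvPolynomial.le_totalDegree (Finset.mem_coe.1 hm)
    have h2 : m i ≤ m.sum fun _ e => e := by
      by_cases hi : m i = 0
      · simp [hi]
      · exact Finset.single_le_sum (f := fun i => m i) (fun _ _ => Nat.zero_le _)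
          (Finsupp.mem_support_iff.2 hi)
    lia
  · intro a _ b _ hab
    exact DFunLike.coe_injective hab

theorem dd_coeff {k : ℕ} (H : MvPolynomial (Fin (k + 1)) ℤ) (i : ℕ) :
    ((MvPolynomial.finSuccEquiv ℤ k H).coeff i).totalDegree ≤ H.totalDegree ∧
    dd_l1 ((MvPolynomial.finSuccEquiv ℤ k H).coeff i) ≤ (H.totalDegree + 1) ^ k * mvNorm H := by
  have ht : ((MvPolynomial.finSuccEquiv ℤ k H).coeff i).totalDegree ≤ H.totalDegree := by
    by_cases hi : (MvPolynomial.finSuccEquiv ℤ k H).coeff i = 0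
    · rw [hi]; simp
    · have := MvPolynomial.totalDegree_coeff_finSuccEquiv_add_le H i hi
      lia
  refine ⟨ht, ?_⟩
  rw [dd_l1]
  refine (Finset.sum_le_card_nsmul _ _ (mvNorm H) ?_).trans ?_
  · intro m hm
    rw [MvPolynomial.mem_support_iff] at hm
    rw [MvPolynomial.finSuccEquiv_coeff_coeff] at hm ⊢
    exact Finset.le_sup (f := fun m => (H.coeff m).natAbs) (MvPolynomial.mem_support_iff.2 hm)
  · rw [smul_eq_mul]
    exact Nat.mul_le_mul_right _ (dd_card _ ht)

theorem dd_finSucc_map {R S : Type*} [CommRing R] [CommRing S] (φ : R →+* S) {k : ℕ}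
    (H : MvPolynomial (Fin (k + 1)) R) :
    MvPolynomial.finSuccEquiv S k (MvPolynomial.map φ H) =
      Polynomial.map (MvPolynomial.map φ) (MvPolynomial.finSuccEquiv R k H) := by
  ext i m
  rw [MvPolynomial.finSuccEquiv_coeff_coeff, Polynomial.coeff_map, MvPolynomial.coeff_map,
    MvPolynomial.coeff_map, MvPolynomial.finSuccEquiv_coeff_coeff]

theorem dd_res_ne {k : ℕ} (H : MvPolynomial (Fin (k + 1)) ℤ)
    (hirr : Irreducible (MvPolynomial.map (Int.castRingHom (AlgebraicClosure ℚ)) H))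
    (hdeg : 1 ≤ MvPolynomial.degreeOf 0 H) :
    let P := MvPolynomial.finSuccEquiv ℤ k H
    P.resultant P.derivative P.natDegree (P.natDegree - 1) ≠ 0 := by
  intro P hres
  set A := AlgebraicClosure ℚ
  set φ : MvPolynomial (Fin k) ℤ →+* MvPolynomial (Fin k) A :=
    MvPolynomial.map (Int.castRingHom A) with hφ
  have hφi : Function.Injective φ := MvPolynomial.map_injective _ (RingHom.injective_int _)
  have hPd : 1 ≤ P.natDegree := by
    rw [MvPolynomial.natDegree_finSuccEquiv]; exact hdeg
  have h1 : Irreducible (P.map φ) := by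
    rw [← dd_finSucc_map]
    exact (MulEquiv.irreducible_iff (MvPolynomial.finSuccEquiv A k)).2 hirr
  have hd1 : (P.map φ).natDegree = P.natDegree := natDegree_map_eq_of_injective hφi _
  have h2 : (P.map φ).IsPrimitive := Irreducible.isPrimitive h1 (by lia)
  set K := FractionRing (MvPolynomial (Fin k) A)
  set ψ := algebraMap (MvPolynomial (Fin k) A) K
  have hψi : Function.Injective ψ := IsFractionRing.injective _ _
  have h3 : Irreducible ((P.map φ).map ψ) :=
    (h2.irreducible_iff_irreducible_map_fraction_map (K := K)).1 h1
  haveI : CharZero K := charZero_of_injective_algebraMap hψi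
  have h4 := h3.separable
  have hd2 : ((P.map φ).map ψ).natDegree = P.natDegree := by
    rw [natDegree_map_eq_of_injective hψi, hd1]
  have h5 := Polynomial.resultant_ne_zero _ _ h4
  rw [hd2, natDegree_derivative, hd2] at h5
  rw [Polynomial.derivative_map, Polynomial.derivative_map, resultant_map_map, resultant_map_map,
    hres] at h5
  simp at h5

theorem dd_main (k D : ℕ) : ∃ K T M : ℕ, ∀ H : MvPolynomial (Fin (k + 1)) ℤ,
    Irreducible (MvPolynomial.map (Int.castRingHom (AlgebraicClosure ℚ)) H) →
    1 ≤ MvPolynomial.degreeOf 0 H → 1 ≤ mvNorm H → H.totalDegree = D →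
    ∃ Δ : MvPolynomial (Fin k) ℤ, Δ ≠ 0 ∧ Δ.totalDegree ≤ T ∧
      (∀ m, (Δ.coeff m).natAbs ≤ K * mvNorm H ^ M) ∧
      ∀ (p : ℕ) [Fact p.Prime] (s : Fin k → ZMod p),
        MvPolynomial.eval s (MvPolynomial.map (Int.castRingHom (ZMod p)) Δ) ≠ 0 →
        ∃ f : (ZMod p)[X], f = Polynomial.map (MvPolynomial.eval s)
          (MvPolynomial.finSuccEquiv (ZMod p) k
            (MvPolynomial.map (Int.castRingHom (ZMod p)) H)) ∧
          f.Separable ∧ 0 < f.natDegree ∧ f.natDegree ≤ D := by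
  refine ⟨(2 * D).factorial * ((D + 1) ^ (k + 1)) ^ (2 * D + 1), D + 2 * D * D, 2 * D + 1, ?_⟩
  intro H hirr hdeg hnorm hD
  set P := MvPolynomial.finSuccEquiv ℤ k H with hP
  set r := P.resultant P.derivative P.natDegree (P.natDegree - 1) with hr
  have hr0 : r ≠ 0 := dd_res_ne H hirr hdeg
  have hPd : 1 ≤ P.natDegree := by
    rw [hP, MvPolynomial.natDegree_finSuccEquiv]; exact hdeg
  have hPD : P.natDegree ≤ D := by
    rw [hP, MvPolynomial.natDegree_finSuccEquiv, ← hD]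
    exact MvPolynomial.degreeOf_le_totalDegree _ _
  have hP0 : P ≠ 0 := by rintro h; rw [h] at hPd; simp at hPd
  set b := (D + 1) ^ (k + 1) * mvNorm H with hb
  have hb1 : 1 ≤ b := Nat.mul_pos (by positivity) hnorm
  have hc : ∀ i, (P.coeff i).totalDegree ≤ D ∧ dd_l1 (P.coeff i) ≤ (D + 1) ^ k * mvNorm H := by
    intro i; rw [← hD]; exact dd_coeff H i
  have hcb : (D + 1) ^ k * mvNorm H ≤ b := by
    rw [hb]; exact Nat.mul_le_mul_right _ (Nat.pow_le_pow_right (by lia) (by lia))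
  have hc' : ∀ i, (P.derivative.coeff i).totalDegree ≤ D ∧ dd_l1 (P.derivative.coeff i) ≤ b := by
    intro i
    rw [coeff_derivative]
    by_cases hi : i + 1 ≤ P.natDegree
    · have e : ((i : MvPolynomial (Fin k) ℤ) + 1) = MvPolynomial.C ((i : ℤ) + 1) := by simp
      rw [e]
      constructor
      · refine (MvPolynomial.totalDegree_mul _ _).trans ?_
        rw [MvPolynomial.totalDegree_C]; exact (hc _).1
      · refine (dd_l1_mul _ _).trans ?_
        rw [dd_l1_C, hb, pow_succ, mul_right_comm]
        exact Nat.mul_le_mul (hc _).2 (by lia)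
    · rw [coeff_eq_zero_of_natDegree_lt (by lia)]; simp [dd_l1_zero]
  have hdet := dd_det (b := b) (t := D) (sylvester P P.derivative P.natDegree (P.natDegree - 1))
    (by
      intro i j
      induction j using Fin.addCases with
      | left j =>
        simp only [sylvester, Matrix.of_apply, Fin.addCases_left]
        split_ifs
        · exact (hc' _).2
        · simp [dd_l1_zero]
      | right j =>
        simp only [sylvester, Matrix.of_apply, Fin.addCases_right]
        split_ifs
        · exact (hc _).2.trans hcb
        · simp [dd_l1_zero])
    (by
      intro i j
      induction j using Fin.addCases with
      | left j =>
        simp only [sylvester, Matrix.of_apply, Fin.addCases_left]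
        split_ifs
        · exact (hc' _).1
        · simp
      | right j =>
        simp only [sylvester, Matrix.of_apply, Fin.addCases_right]
        split_ifs
        · exact (hc _).1
        · simp)
  have hdet1 : dd_l1 r ≤ (2 * D).factorial * b ^ (2 * D) :=
    hdet.1.trans (Nat.mul_le_mul (Nat.factorial_le (by lia)) (Nat.pow_le_pow_right hb1 (by lia)))
  have hdet2 : r.totalDegree ≤ 2 * D * D := hdet.2.trans (Nat.mul_le_mul_right _ (by lia))
  refine ⟨P.leadingCoeff * r, mul_ne_zero (leadingCoeff_ne_zero.2 hP0) hr0, ?_, ?_, ?_⟩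
  · exact (MvPolynomial.totalDegree_mul _ _).trans (add_le_add (hc _).1 hdet2)
  · intro m
    refine (dd_coeff_le_l1 _ m).trans ((dd_l1_mul _ _).trans ?_)
    refine (Nat.mul_le_mul ((hc _).2.trans hcb) hdet1).trans (le_of_eq ?_)
    rw [hb]
    generalize (D + 1) ^ (k + 1) = u
    ring
  · intro p _ s hs
    set φ : MvPolynomial (Fin k) ℤ →+* ZMod p :=
      (MvPolynomial.eval s).comp (MvPolynomial.map (Int.castRingHom (ZMod p))) with hφ
    have hs' : φ (P.leadingCoeff * r) ≠ 0 := hs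
    rw [map_mul] at hs'
    have hs1 := left_ne_zero_of_mul hs'
    have hs2 := right_ne_zero_of_mul hs'
    refine ⟨P.map φ, ?_, ?_, ?_, ?_⟩
    · rw [dd_finSucc_map, Polynomial.map_map]
    · obtain ⟨a, c, _, _, hac⟩ := Polynomial.exists_mul_add_mul_eq_C_resultant P P.derivative
        (m := P.natDegree) (n := P.natDegree - 1) le_rfl (natDegree_derivative_le _)
        (Or.inl (by lia))
      have := congrArg (Polynomial.map φ) hac
      rw [Polynomial.map_add, Polynomial.map_mul, Polynomial.map_mul, Polynomial.map_C,
        ← derivative_map] at this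
      refine ⟨C (φ r)⁻¹ * a.map φ, C (φ r)⁻¹ * c.map φ, ?_⟩
      have e : C (φ r)⁻¹ * C (φ r) = (1 : (ZMod p)[X]) := by
        rw [← C_mul, inv_mul_cancel₀ hs2, C_1]
      rw [← e, ← this]; ring
    · rw [natDegree_map_of_leadingCoeff_ne_zero _ hs1]; exact hPd
    · exact natDegree_map_le.trans hPD

theorem ee_omega (A : ℝ) (hA : 0 ≤ A) (x : ℝ) (hx : 3 ≤ x) (N : ℕ) (hN : N ≠ 0)
    (h : Real.log N ≤ A * Real.log x) :
    (N.primeFactors.card : ℝ) ≤ (2 + 2 * A) * Real.log x / Real.log (Real.log x) := by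
  classical
  set w := Real.log x with hw
  have hw1 : 1 < w := by
    rw [hw, Real.lt_log_iff_exp_lt (by linarith)]
    linarith [Real.exp_one_lt_d9]
  have hlw : 0 < Real.log w := Real.log_pos hw1
  set y := Real.sqrt w with hy
  have hy1 : 1 < y := by rw [hy]; exact Real.lt_sqrt_of_sq_lt (by linarith)
  have hyy : y * y = w := Real.mul_self_sqrt (by linarith)
  have hly : Real.log w = 2 * Real.log y := by
    rw [← hyy, Real.log_mul (by linarith) (by linarith)]; ring
  have hlyy : Real.log y ≤ y := (Real.log_le_sub_one_of_pos (by linarith)).trans (by linarith)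
  have hly0 : 0 < Real.log y := Real.log_pos hy1
  set S1 := N.primeFactors.filter (fun q : ℕ => (q : ℝ) ≤ y) with hS1
  set S2 := N.primeFactors.filter (fun q : ℕ => ¬ (q : ℝ) ≤ y) with hS2
  have hcard : N.primeFactors.card = S1.card + S2.card :=
    (Finset.card_filter_add_card_filter_not (s := N.primeFactors) (fun q : ℕ => (q : ℝ) ≤ y)).symm
  have h1 : (S1.card : ℝ) ≤ y := by
    have : S1 ⊆ Finset.Icc 1 ⌊y⌋₊ := by
      intro q hq
      rw [hS1, Finset.mem_filter] at hq
      rw [Finset.mem_Icc]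
      exact ⟨(Nat.prime_of_mem_primeFactors hq.1).one_le, Nat.le_floor hq.2⟩
    have h2 := Finset.card_le_card this
    rw [Nat.card_Icc, Nat.add_sub_cancel] at h2
    exact (Nat.cast_le.2 h2).trans (Nat.floor_le (by linarith))
  have h2 : (S2.card : ℝ) * Real.log y ≤ A * w := by
    refine le_trans ?_ h
    have h3 : ∏ q ∈ S2, q ≤ N := by
      refine Nat.le_of_dvd (Nat.pos_of_ne_zero hN) (dvd_trans ?_ (Nat.prod_primeFactors_dvd N))
      exact Finset.prod_dvd_prod_of_subset _ _ _ (Finset.filter_subset _ _)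
    have h4 : y ^ S2.card ≤ ∏ q ∈ S2, (q : ℝ) := by
      rw [← Finset.prod_const]
      refine Finset.prod_le_prod (fun _ _ => by linarith) fun q hq => ?_
      rw [hS2, Finset.mem_filter] at hq
      linarith [hq.2]
    have h5 : y ^ S2.card ≤ (N : ℝ) := h4.trans (by rw [← Nat.cast_prod]; exact_mod_cast h3)
    rw [← Real.log_pow]
    exact Real.log_le_log (by positivity) h5
  rw [hcard, le_div_iff₀ hlw]
  push_cast
  rw [hly]
  nlinarith [mul_le_mul h1 hlyy hly0.le (by linarith : (0:ℝ) ≤ y)]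

theorem ff_bad {k T p : ℕ} [Fact p.Prime] (g : MvPolynomial (Fin k) (ZMod p)) (hg : g ≠ 0)
    (hT : g.totalDegree ≤ T) :
    ((Finset.univ.filter fun s : Fin k → ZMod p => MvPolynomial.eval s g = 0).card : ℝ) * p ≤
      T * (p : ℝ) ^ k := by
  classical
  have h := MvPolynomial.schwartz_zippel_totalDegree hg (Finset.univ : Finset (ZMod p))
  rw [Fintype.piFinset_univ, Finset.card_univ, ZMod.card] at h
  have hp : (0 : ℚ≥0) < p := by exact_mod_cast (Fact.out : p.Prime).pos
  rw [div_le_div_iff₀ (by positivity) hp] at h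
  have h' : (Finset.univ.filter fun s : Fin k → ZMod p => MvPolynomial.eval s g = 0).card * p ≤
      g.totalDegree * p ^ k := by exact_mod_cast h
  have h'' := h'.trans (Nat.mul_le_mul_right _ hT)
  exact_mod_cast h''

theorem ff_sum {k T p D : ℕ} [Fact p.Prime] (Cw : ℝ) (hC : 0 ≤ Cw) (d : ℕ)
    (hW : ∀ f : (ZMod p)[X], f.Separable → 0 < f.natDegree → f.natDegree ≤ D →
      ∀ χ : MulChar (ZMod p) ℂ, orderOf χ = d →
        ‖∑ x : ZMod p, χ (f.eval x)‖ ≤ Cw * Real.sqrt p)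
    (h : MvPolynomial (Fin (k + 1)) (ZMod p)) (g : MvPolynomial (Fin k) (ZMod p)) (hg : g ≠ 0)
    (hT : g.totalDegree ≤ T)
    (hgood : ∀ s : Fin k → ZMod p, MvPolynomial.eval s g ≠ 0 →
      ∃ f : (ZMod p)[X], f = Polynomial.map (MvPolynomial.eval s)
          (MvPolynomial.finSuccEquiv (ZMod p) k h) ∧
          f.Separable ∧ 0 < f.natDegree ∧ f.natDegree ≤ D)
    (χ : MulChar (ZMod p) ℂ) (hχ : orderOf χ = d) :
    ∑ u ∈ Finset.univ.filter (fun u : Fin (k + 1) → ZMod p => u 0 = 0),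
      ‖∑ x : Fin (k + 1) → ZMod p, χ (MvPolynomial.eval x h) * eZp p (∑ i, u i * x i)‖ ^ 2 ≤
    (Cw ^ 2 + T) * (p : ℝ) ^ (2 * k + 1) := by
  classical
  rw [pv_slice k (fun x => χ (MvPolynomial.eval x h))]
  have hp0 : (0 : ℝ) ≤ p := Nat.cast_nonneg _
  have hterm : ∀ s : Fin k → ZMod p,
      ‖∑ x0 : ZMod p, χ (MvPolynomial.eval (Fin.cons x0 s : Fin (k + 1) → ZMod p) h)‖ ^ 2 ≤
      Cw ^ 2 * p + (if MvPolynomial.eval s g = 0 then (p : ℝ) ^ 2 else 0) := by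
    intro s
    split_ifs with hs
    · have : ‖∑ x0 : ZMod p, χ (MvPolynomial.eval (Fin.cons x0 s : Fin (k + 1) → ZMod p) h)‖
          ≤ p := by
        refine (norm_sum_le _ _).trans ?_
        refine (Finset.sum_le_card_nsmul _ _ 1
          fun i _ => DirichletCharacter.norm_le_one χ _).trans ?_
        simp [ZMod.card]
      have h2 := pow_le_pow_left₀ (norm_nonneg _) this 2
      have : 0 ≤ Cw ^ 2 * p := by positivity
      linarith
    · obtain ⟨f, hf, h1, h2, h3⟩ := hgood s hs
      have := hW f h1 h2 h3 χ hχ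
      simp only [MvPolynomial.eval_eq_eval_mv_eval', ← hf]
      have h2 := pow_le_pow_left₀ (norm_nonneg _) this 2
      rw [mul_pow, Real.sq_sqrt hp0] at h2
      linarith
  have hsum := Finset.sum_le_sum fun s (_ : s ∈ (Finset.univ : Finset (Fin k → ZMod p))) => hterm s
  rw [Finset.sum_add_distrib, Finset.sum_const, ← Finset.sum_filter, Finset.sum_const] at hsum
  have hb := ff_bad g hg hT
  have hcard : ((Finset.univ : Finset (Fin k → ZMod p)).card : ℝ) = (p : ℝ) ^ k := by
    simp [ZMod.card]
  rw [nsmul_eq_mul, nsmul_eq_mul, hcard] at hsum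
  have hb2 := mul_le_mul_of_nonneg_right hb hp0
  have hpk : (0 : ℝ) ≤ (p : ℝ) ^ k := by positivity
  calc _ ≤ (p : ℝ) ^ k * ((p : ℝ) ^ k * (Cw ^ 2 * p) + T * (p : ℝ) ^ k * p) := by
        refine mul_le_mul_of_nonneg_left (hsum.trans ?_) hpk
        linarith
    _ = _ := by ring

theorem statement17 (n : ℕ) (hn : 1 ≤ n) (DH : ℕ) :
    ∃ C : ℝ, 0 < C ∧ ∀ d : ℕ, 2 ≤ d → ∃ C' : ℝ, 0 < C' ∧
      ∀ H : MvPolynomial (Fin n) ℤ,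
        Irreducible (MvPolynomial.map (Int.castRingHom (AlgebraicClosure ℚ)) H) →
        1 ≤ MvPolynomial.degreeOf (⟨0, by omega⟩ : Fin n) H →
        3 ≤ mvNorm H → H.totalDegree = DH →
        ∃ E : Finset ℕ, (∀ p ∈ E, p.Prime) ∧
          (E.card : ℝ) ≤
            C * Real.log (mvNorm H : ℝ) / Real.log (Real.log (mvNorm H : ℝ)) ∧
          ∀ p : ℕ, ∀ hp : p.Prime, p ∉ E →
            haveI : NeZero p := ⟨hp.ne_zero⟩;
            ∀ χ : MulChar (ZMod p) ℂ, orderOf χ = d →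
              (∑ u ∈ Finset.univ.filter (fun u : Fin n → ZMod p => u ⟨0, by omega⟩ = 0),
                ‖∑ x : Fin n → ZMod p,
                    χ (MvPolynomial.eval x (MvPolynomial.map (Int.castRingHom (ZMod p)) H)) *
                      eZp p (∑ i, u i * x i)‖ ^ 2)
                ≤ C' * (p : ℝ) ^ (2 * n - 1) := by
  obtain ⟨k, rfl⟩ : ∃ k, n = k + 1 := ⟨n - 1, by omega⟩
  obtain ⟨K, T, M, hmain⟩ := dd_main k DH
  refine ⟨2 + 2 * ((K : ℝ) + M), by positivity, fun d hd => ?_⟩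
  obtain ⟨Cw, hCw, hW⟩ := sp_weil d DH hd
  refine ⟨Cw ^ 2 + T + 1, by positivity, ?_⟩
  intro H hirr hdeg hnorm hD
  obtain ⟨Δ, hΔ, hΔT, hΔc, hgood⟩ := hmain H hirr hdeg (by omega) hD
  obtain ⟨m, hm⟩ := MvPolynomial.ne_zero_iff.1 hΔ
  set N := (Δ.coeff m).natAbs with hN
  have hN0 : N ≠ 0 := Int.natAbs_ne_zero.2 hm
  have hx3 : (3 : ℝ) ≤ (mvNorm H : ℝ) := by exact_mod_cast hnorm
  have hK0 : K ≠ 0 := by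
    rintro rfl
    have := hΔc m
    rw [zero_mul] at this
    omega
  have hl1 : 1 ≤ Real.log (mvNorm H : ℝ) := by
    rw [Real.le_log_iff_exp_le (by linarith)]
    linarith [Real.exp_one_lt_d9]
  have hlogN : Real.log N ≤ ((K : ℝ) + M) * Real.log (mvNorm H : ℝ) := by
    have h1 : (N : ℝ) ≤ (K : ℝ) * (mvNorm H : ℝ) ^ M := by exact_mod_cast hΔc m
    have hNpos : (0 : ℝ) < N := by exact_mod_cast Nat.pos_of_ne_zero hN0
    have hKpos : (0 : ℝ) < K := by exact_mod_cast Nat.pos_of_ne_zero hK0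
    have h2 := Real.log_le_log hNpos h1
    rw [Real.log_mul hKpos.ne' (by positivity), Real.log_pow] at h2
    have h3 : Real.log K ≤ K := (Real.log_le_sub_one_of_pos hKpos).trans (by linarith)
    nlinarith
  refine ⟨N.primeFactors, fun p hp => Nat.prime_of_mem_primeFactors hp,
    ee_omega _ (by positivity) _ hx3 N hN0 hlogN, ?_⟩
  intro p hp hpE
  haveI : Fact p.Prime := ⟨hp⟩
  intro χ hχ
  have hg0 : MvPolynomial.map (Int.castRingHom (ZMod p)) Δ ≠ 0 := by
    intro h0
    have := congrArg (MvPolynomial.coeff m) h0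
    rw [MvPolynomial.coeff_map, MvPolynomial.coeff_zero, eq_intCast,
      ZMod.intCast_zmod_eq_zero_iff_dvd] at this
    exact hpE (Nat.mem_primeFactors.2 ⟨hp, Int.natCast_dvd.1 this, hN0⟩)
  have hgT : (MvPolynomial.map (Int.castRingHom (ZMod p)) Δ).totalDegree ≤ T :=
    (Finset.sup_mono (MvPolynomial.support_map_subset _ _)).trans hΔT
  have hfin := ff_sum (D := DH) Cw hCw d (hW p)
    (MvPolynomial.map (Int.castRingHom (ZMod p)) H) _ hg0 hgT (fun s hs => hgood p s hs) χ hχ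
  have hp0 : (0 : ℝ) ≤ (p : ℝ) ^ (2 * k + 1) := by positivity
  have e : 2 * (k + 1) - 1 = 2 * k + 1 := by omega
  rw [e]
  refine le_trans (le_of_eq ?_) (hfin.trans (by nlinarith))
  rfl
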